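/- arXiv:1006.1548 — 4 statements merged into one kernel-verified Lean document; each statement's English description precedes it below -/
import Mathlib

section
/- Let N be a prime number and let F ∈ ℂ^{N×N} be the N-point unitary DFT matrix. Then for any row-index set R ⊆ {0,…,N−1} with |R| = P and any column-index set C ⊆ {0,…,N−1} with |C| = S, where P ≥ S, the tall submatrix F(R,C) ∈ ℂ^{P×S} has full column rank S (its S columns are linearly independent). -/
open Matrix Complex

/-- The `N`-point unitary DFT matrix: `F j k = N^{-1/2} exp(-2πi jk/N)`. -/
noncomputable def dftMatrix (N : ℕ) : Matrix (Fin N) (Fin N) ℂ :=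
  Matrix.of fun j k : Fin N =>
    (1 / Real.sqrt N : ℝ) *
      Complex.exp (-2 * Real.pi * Complex.I * (j : ℕ) * (k : ℕ) / (N : ℕ))

open Polynomial in
/-- Vanishing to high order at `1` forces vanishing power moments. -/
lemma moment_zero {K : Type*} [CommRing K] {n : ℕ} (c : Fin n → ℕ) (i : ℕ) :
    ∀ a : Fin n → K, (X - 1 : K[X]) ^ (i + 1) ∣ ∑ j, C (a j) * X ^ c j →
      ∑ j, a j * (c j : K) ^ i = 0 := by
  induction i with
  | zero =>
    intro a h
    obtain ⟨q, hq⟩ := h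
    have := congrArg (eval 1) hq
    simpa [eval_finsetSum] using this
  | succ i ih =>
    intro a h
    have h2 : (X - 1 : K[X]) ^ (i + 1) ∣ ∑ j, C (a j * (c j : K)) * X ^ c j := by
      have e : ∑ j, C (a j * (c j : K)) * X ^ c j
          = X * derivative (∑ j, C (a j) * X ^ c j) := by
        rw [derivative_sum, Finset.mul_sum]
        refine Finset.sum_congr rfl fun j _ => ?_
        rw [derivative_C_mul_X_pow]
        rcases Nat.eq_zero_or_pos (c j) with h0 | h0
        · simp [h0]
        · obtain ⟨m, hm⟩ := Nat.exists_eq_succ_of_ne_zero h0.ne'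
          rw [hm]
          simp only [Nat.succ_eq_add_one, Nat.add_sub_cancel]
          ring
      rw [e]
      obtain ⟨q, hq⟩ := h
      rw [hq, derivative_mul, derivative_pow]
      refine Dvd.dvd.mul_left (dvd_add ?_ ?_) _
      · simp only [Nat.add_sub_cancel]
        exact Dvd.dvd.mul_right (Dvd.dvd.mul_right (Dvd.intro_left _ rfl) _) _
      · exact Dvd.dvd.mul_right (pow_dvd_pow _ (Nat.le_succ _)) _
    have := ih _ h2
    rw [← this]
    refine Finset.sum_congr rfl fun j _ => ?_
    ring

open Polynomial in
lemma descent_step {A : Type*} [CommRing A] [IsDomain A] {p n : ℕ} [Fact p.Prime]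
    (φ : A →+* ZMod p) (z : A) (hz : φ z = 1)
    (r : Fin n → ℕ) (hr : Function.Injective fun i => z ^ r i)
    (c : Fin n → ℕ) (hc : Function.Injective c) (hcp : ∀ i, c i < p)
    (a : Fin n → A) (ha : ∀ i, ∑ j, z ^ (r i * c j) * a j = 0) (j : Fin n) : φ (a j) = 0 := by
  have h1 : ∏ i, (X - C (z ^ r i)) ∣ ∑ j, C (a j) * X ^ c j := by
    by_cases h0 : ∑ j, C (a j) * X ^ c j = 0
    · rw [h0]; exact dvd_zero _
    have h := (Multiset.prod_X_sub_C_dvd_iff_le_roots h0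
      (Finset.univ.val.map fun i => z ^ r i)).2 (by
        rw [Multiset.le_iff_subset (Finset.univ.nodup.map hr)]
        intro x hx
        obtain ⟨i, _, rfl⟩ := Multiset.mem_map.1 hx
        rw [mem_roots h0, IsRoot, eval_finsetSum, ← ha i]
        refine Finset.sum_congr rfl fun j _ => ?_
        rw [eval_mul, eval_C, eval_pow, eval_X, ← pow_mul, mul_comm])
    rw [Multiset.map_map] at h
    exact h
  have h2 := Polynomial.map_dvd φ h1
  simp only [Polynomial.map_prod, Polynomial.map_sum, Polynomial.map_sub, Polynomial.map_mul,
    Polynomial.map_pow, map_X, map_C, map_pow, hz, one_pow, map_one, Finset.prod_const,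
    Finset.card_univ, Fintype.card_fin] at h2
  have h3 : ∀ i : Fin n, ∑ j, φ (a j) * (c j : ZMod p) ^ (i : ℕ) = 0 := fun i =>
    moment_zero c i (fun j => φ (a j)) ((pow_dvd_pow _ i.2).trans h2)
  have hinj : Function.Injective fun j => (c j : ZMod p) := by
    intro x y hxy
    apply hc
    have := (ZMod.natCast_eq_natCast_iff' _ _ _).1 hxy
    rwa [Nat.mod_eq_of_lt (hcp x), Nat.mod_eq_of_lt (hcp y)] at this
  have := Matrix.eq_zero_of_forall_pow_sum_mul_pow_eq_zero hinj h3
  exact congrFun this j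

lemma det_ne {A : Type*} [CommRing A] [IsDomain A] [IsNoetherianRing A] {p n : ℕ}
    [Fact p.Prime]
    (φ : A →+* ZMod p) (z : A) (hz : φ z = 1) (hz1 : z ≠ 1) (hker : ∀ x, φ x = 0 → z - 1 ∣ x)
    (r : Fin n → ℕ) (hr : Function.Injective fun i => z ^ r i)
    (c : Fin n → ℕ) (hc : Function.Injective c) (hcp : ∀ i, c i < p) :
    (Matrix.of fun i j => z ^ (r i * c j)).det ≠ 0 := by
  intro hdet
  obtain ⟨v, hv, hMv⟩ := Matrix.exists_mulVec_eq_zero_iff.2 hdet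
  have hπ : z - 1 ≠ 0 := sub_ne_zero.2 hz1
  have key : ∀ m : ℕ, ∀ a : Fin n → A, (∀ i, ∑ j, z ^ (r i * c j) * a j = 0) →
      ∀ j, (z - 1) ^ m ∣ a j := by
    intro m
    induction m with
    | zero => intro a _ j; simp
    | succ m ih =>
      intro a ha j
      have hd : ∀ j, z - 1 ∣ a j := fun j =>
        hker _ (descent_step φ z hz r hr c hc hcp a ha j)
      choose b hb using hd
      have hb' : ∀ i, ∑ j, z ^ (r i * c j) * b j = 0 := by
        intro i
        have := ha i
        simp only [hb] at this
        apply mul_left_cancel₀ hπ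
        rw [mul_zero, ← this, Finset.mul_sum]
        exact Finset.sum_congr rfl fun j _ => by ring
      rw [hb j, pow_succ']
      exact mul_dvd_mul_left _ (ih b hb' j)
  obtain ⟨j, hj⟩ := Function.ne_iff.1 hv
  have hnu : ¬ IsUnit (z - 1) := fun h => by
    have := h.map φ
    simp [hz] at this
  have hfin : FiniteMultiplicity (z - 1) (v j) := FiniteMultiplicity.of_not_isUnit hnu hj
  obtain ⟨m, hm⟩ := hfin
  refine hm (key _ v (fun i => ?_) j)
  simpa [Matrix.mulVec, dotProduct] using congrFun hMv i

open Polynomial in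
lemma chebotarev {p n : ℕ} (hp : p.Prime) (w : ℂ) (hw : IsPrimitiveRoot w p)
    (r c : Fin n → ℕ) (hr : Function.Injective r) (hrp : ∀ i, r i < p)
    (hc : Function.Injective c) (hcp : ∀ i, c i < p) :
    (Matrix.of fun i j => w ^ (r i * c j)).det ≠ 0 := by
  have : Fact p.Prime := ⟨hp⟩
  let f : ℤ[X] := cyclotomic p ℤ
  let ψ : AdjoinRoot f →+* ℂ := AdjoinRoot.lift (Int.castRingHom ℂ) w (by
    rw [← eval_map, map_cyclotomic_int]
    exact hw.isRoot_cyclotomic hp.pos)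
  let φ : AdjoinRoot f →+* ZMod p := AdjoinRoot.lift (Int.castRingHom (ZMod p)) 1 (by
    rw [← eval_map, map_cyclotomic_int, eval_one_cyclotomic_prime]
    simp)
  have hψz : ψ (AdjoinRoot.root f) = w := AdjoinRoot.lift_root _
  have hφz : φ (AdjoinRoot.root f) = 1 := AdjoinRoot.lift_root _
  have hψ : Function.Injective ψ := by
    rw [injective_iff_map_eq_zero]
    intro x
    obtain ⟨g, rfl⟩ := AdjoinRoot.mk_surjective x
    intro hg
    rw [AdjoinRoot.mk_eq_zero]
    change cyclotomic p ℤ ∣ g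
    rw [cyclotomic_eq_minpoly hw hp.pos]
    apply minpoly.isIntegrallyClosed_dvd (hw.isIntegral hp.pos)
    rw [AdjoinRoot.lift_mk] at hg
    exact hg
  have : IsDomain (AdjoinRoot f) := hψ.isDomain ψ
  have hker : ∀ x, φ x = 0 → AdjoinRoot.root f - 1 ∣ x := by
    have hev : ∀ g : ℤ[X], AdjoinRoot.root f - 1 ∣ AdjoinRoot.mk f g - (g.eval 1 : ℤ) := by
      intro g
      have h := X_sub_C_dvd_sub_C_eval (a := (1 : ℤ)) (p := g)
      simpa using map_dvd (AdjoinRoot.mk f) h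
    have hpd : AdjoinRoot.root f - 1 ∣ (p : AdjoinRoot f) := by
      have := hev f
      rw [AdjoinRoot.mk_self, eval_one_cyclotomic_prime] at this
      simpa using this
    intro x
    obtain ⟨g, rfl⟩ := AdjoinRoot.mk_surjective x
    intro hg
    rw [AdjoinRoot.lift_mk, eval₂_at_one] at hg
    have hd : (p : ℤ) ∣ g.eval 1 := (ZMod.intCast_zmod_eq_zero_iff_dvd _ _).1 hg
    have h2 : (p : AdjoinRoot f) ∣ ((g.eval 1 : ℤ) : AdjoinRoot f) := by
      simpa using map_dvd (Int.castRingHom (AdjoinRoot f)) hd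
    exact (dvd_iff_dvd_of_dvd_sub (hev g)).2 (hpd.trans h2)
  have h := det_ne (n := n) φ (AdjoinRoot.root f) hφz (by
    intro h
    rw [h, map_one] at hψz
    exact hw.ne_one hp.one_lt hψz.symm) hker r (by
      intro i k h
      have := congrArg ψ h
      simp only [map_pow, hψz] at this
      exact hr (hw.pow_inj (hrp i) (hrp k) this)) c hc hcp
  intro h0
  apply h
  apply hψ
  rw [map_zero, RingHom.map_det, ← h0]
  congr 1
  ext i j
  simp [hψz]

/-- If `N` is prime, then any tall `P × S` submatrix (with `P ≥ S`) of the `N`-point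
unitary DFT matrix, obtained by keeping the rows indexed by `R` (the embedding `r`)
and the columns indexed by `C` (the embedding `c`), has full column rank `S`,
i.e. its `S` columns are linearly independent. -/
theorem dft_tall_submatrix_full_column_rank (N P S : ℕ) (hN : N.Prime) (hPS : S ≤ P)
    (r : Fin P ↪ Fin N) (c : Fin S ↪ Fin N) :
    ((dftMatrix N).submatrix r c).rank = S ∧
      LinearIndependent ℂ
        (fun j : Fin S => fun i : Fin P => dftMatrix N (r i) (c j)) := by
  have hli : LinearIndependent ℂ
        (fun j : Fin S => fun i : Fin P => dftMatrix N (r i) (c j)) := by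
    have hN0 : (N : ℂ) ≠ 0 := Nat.cast_ne_zero.2 hN.ne_zero
    have hw : IsPrimitiveRoot (Complex.exp (2 * Real.pi * Complex.I / N))⁻¹ N :=
      (Complex.isPrimitiveRoot_exp N hN.ne_zero).inv
    set w := (Complex.exp (2 * Real.pi * Complex.I / N))⁻¹ with hwdef
    have hs : ((1 / Real.sqrt N : ℝ) : ℂ) ≠ 0 := by
      rw [Complex.ofReal_ne_zero]
      have : (0 : ℝ) < N := Nat.cast_pos.2 hN.pos
      positivity
    have hent : ∀ i j, dftMatrix N i j = ((1 / Real.sqrt N : ℝ) : ℂ) * w ^ ((i : ℕ) * (j : ℕ)) := by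
      intro i j
      simp only [dftMatrix, Matrix.of_apply]
      congr 1
      rw [hwdef, ← Complex.exp_neg, ← Complex.exp_nat_mul]
      congr 1
      push_cast
      ring
    have hdet := chebotarev hN w hw (fun i : Fin S => (r (Fin.castLE hPS i) : ℕ))
      (fun j => (c j : ℕ))
      (fun x y h => Fin.castLE_injective hPS (r.injective (Fin.ext h))) (fun i => (r _).2)
      (fun x y h => c.injective (Fin.ext h)) (fun i => (c _).2)
    rw [Fintype.linearIndependent_iff]
    intro g hg
    have := Matrix.eq_zero_of_mulVec_eq_zero hdet (v := g) (by
      ext i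
      have h := congrFun hg (Fin.castLE hPS i)
      simp only [Finset.sum_apply, Pi.smul_apply, smul_eq_mul, hent, Pi.zero_apply] at h
      simp only [Matrix.mulVec, dotProduct, Matrix.of_apply, Pi.zero_apply]
      apply (mul_eq_zero.1 _).resolve_left hs
      rw [← h, Finset.mul_sum]
      exact Finset.sum_congr rfl fun j _ => by ring)
    exact fun j => congrFun this j
  refine ⟨?_, hli⟩
  rw [← Matrix.rank_transpose]
  have := LinearIndependent.rank_matrix (M := ((dftMatrix N).submatrix r c)ᵀ) hli
  simpa using this
end

section
/- Let P ≥ S ≥ 1 be integers and let A, B ∈ ℂ^{P×S} both have rank S, with A ≠ B and tr(AᴴA) = tr(BᴴB). Fix a real number N > 0, and for each ρ > 0 set c = S/(ρN) and define E(ρ) = (1/S)·tr[(I_S − Aᴴ(AAᴴ + c·I_P)^{-1}B)·(I_S − Aᴴ(AAᴴ + c·I_P)^{-1}B)ᴴ] + (1/(ρN))·tr[Aᴴ(AAᴴ + c·I_P)^{-2}A]. Then E(ρ) converges as ρ → ∞ to (1/S)·‖(AᴴA)^{-1}AᴴB − I_S‖_F², this limit is strictly positive, and consequently there exists no constant C such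 that E(ρ) ≤ C/ρ for all ρ > 0. -/
open Matrix Complex Filter Topology

open scoped ComplexOrder

lemma aux_inj {P S : ℕ} (A : Matrix (Fin P) (Fin S) ℂ) (h : A.rank = S) :
    Function.Injective A.mulVec := by
  have h1 := LinearMap.finrank_range_add_finrank_ker A.mulVecLin
  have h2 : Module.finrank ℂ (LinearMap.range A.mulVecLin) = S := h
  rw [h2, Module.finrank_fin_fun] at h1
  have h3 : Module.finrank ℂ (LinearMap.ker A.mulVecLin) = 0 := by omega
  have h4 := Submodule.finrank_eq_zero.mp h3
  exact LinearMap.ker_eq_bot.mp h4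

lemma aux_push {P S : ℕ} (A : Matrix (Fin P) (Fin S) ℂ) (c : ℝ) (hc : 0 < c) :
    Aᴴ * (A * Aᴴ + (c : ℂ) • (1 : Matrix (Fin P) (Fin P) ℂ))⁻¹ =
      (Aᴴ * A + (c : ℂ) • (1 : Matrix (Fin S) (Fin S) ℂ))⁻¹ * Aᴴ := by
  have hc' : (0 : ℂ) < (c : ℂ) := by exact_mod_cast hc
  have hU : IsUnit (A * Aᴴ + (c : ℂ) • (1 : Matrix (Fin P) (Fin P) ℂ)) :=
    (PosDef.posSemidef_add (posSemidef_self_mul_conjTranspose A)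
      (PosDef.smul PosDef.one hc')).isUnit
  have hV : IsUnit (Aᴴ * A + (c : ℂ) • (1 : Matrix (Fin S) (Fin S) ℂ)) :=
    (PosDef.posSemidef_add (posSemidef_conjTranspose_mul_self A)
      (PosDef.smul PosDef.one hc')).isUnit
  rw [Matrix.isUnit_iff_isUnit_det] at hU hV
  have key : (Aᴴ * A + (c : ℂ) • (1 : Matrix (Fin S) (Fin S) ℂ)) * Aᴴ =
      Aᴴ * (A * Aᴴ + (c : ℂ) • (1 : Matrix (Fin P) (Fin P) ℂ)) := by
    simp [Matrix.add_mul, Matrix.mul_add, Matrix.mul_assoc]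
  calc _ = (Aᴴ * A + (c : ℂ) • (1 : Matrix (Fin S) (Fin S) ℂ))⁻¹ *
        ((Aᴴ * A + (c : ℂ) • (1 : Matrix (Fin S) (Fin S) ℂ)) * Aᴴ) *
        (A * Aᴴ + (c : ℂ) • (1 : Matrix (Fin P) (Fin P) ℂ))⁻¹ := by
        rw [Matrix.nonsing_inv_mul_cancel_left _ _ hV]
    _ = _ := by
        rw [key, ← Matrix.mul_assoc, Matrix.mul_nonsing_inv_cancel_right _ _ hU]

lemma aux_trace {S : ℕ} (M : Matrix (Fin S) (Fin S) ℂ) :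
    (Matrix.trace ((1 - M) * (1 - M)ᴴ)).re =
      ∑ i : Fin S, ∑ j : Fin S, Complex.normSq ((M - 1) i j) := by
  have : (1 - M) * (1 - M)ᴴ = (M - 1) * (M - 1)ᴴ := by
    rw [← neg_sub M 1, Matrix.conjTranspose_neg, Matrix.neg_mul, Matrix.mul_neg, neg_neg]
  rw [this]
  simp only [Matrix.trace, Matrix.diag, Matrix.mul_apply, Complex.re_sum,
    Matrix.conjTranspose_apply]
  refine Finset.sum_congr rfl fun i _ => Finset.sum_congr rfl fun j _ => ?_
  rw [Complex.star_def, Complex.mul_conj, Complex.ofReal_re]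

/-- Conditional MSE of the pilot-aided MMSE channel estimate under a WRONG support
hypothesis.  `A, B ∈ ℂ^{P×S}` both have rank `S`, `A ≠ B`, and `tr(AᴴA) = tr(BᴴB)`.
With `c = S/(ρN)` and
`E(ρ) = (1/S) tr[(I − Aᴴ(AAᴴ+cI)⁻¹B)(I − Aᴴ(AAᴴ+cI)⁻¹B)ᴴ] + (1/(ρN)) tr[Aᴴ(AAᴴ+cI)⁻²A]`,
`E(ρ)` converges as `ρ → ∞` to `(1/S)‖(AᴴA)⁻¹AᴴB − I‖_F²`, which is strictly
positive; consequently no constant `C` satisfies `E(ρ) ≤ C/ρ` for all `ρ > 0`. -/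
theorem mmse_wrong_support (P S : ℕ) (hS : 1 ≤ S) (hPS : S ≤ P)
    (A B : Matrix (Fin P) (Fin S) ℂ) (hArank : A.rank = S) (hBrank : B.rank = S)
    (hAB : A ≠ B)
    (htr : Matrix.trace (Aᴴ * A) = Matrix.trace (Bᴴ * B))
    (N : ℝ) (hN : 0 < N) :
    let E : ℝ → ℝ := fun ρ =>
      (1 / (S : ℝ)) *
          (Matrix.trace
            (((1 : Matrix (Fin S) (Fin S) ℂ) -
                Aᴴ * (A * Aᴴ + (((S : ℝ) / (ρ * N) : ℝ) : ℂ) • 1)⁻¹ * B) *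
              ((1 : Matrix (Fin S) (Fin S) ℂ) -
                Aᴴ * (A * Aᴴ + (((S : ℝ) / (ρ * N) : ℝ) : ℂ) • 1)⁻¹ * B)ᴴ)).re +
        (1 / (ρ * N)) *
          (Matrix.trace
            (Aᴴ * ((A * Aᴴ + (((S : ℝ) / (ρ * N) : ℝ) : ℂ) • 1)⁻¹ *
                (A * Aᴴ + (((S : ℝ) / (ρ * N) : ℝ) : ℂ) • 1)⁻¹) * A)).re
    let lim : ℝ :=
      (1 / (S : ℝ)) *
        ∑ i : Fin S, ∑ j : Fin S,
          Complex.normSq (((((Aᴴ * A)⁻¹ * Aᴴ * B - 1)) : Matrix (Fin S) (Fin S) ℂ) i j)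
    Tendsto E atTop (𝓝 lim) ∧ 0 < lim ∧
      ¬ ∃ C : ℝ, ∀ ρ : ℝ, 0 < ρ → E ρ ≤ C / ρ := by
  intro E lim
  have hSpos : (0 : ℝ) < S := by exact_mod_cast hS
  have hG : (Aᴴ * A).PosDef := PosDef.conjTranspose_mul_self A (aux_inj A hArank)
  have hGdet : IsUnit (Aᴴ * A).det := (Matrix.isUnit_iff_isUnit_det _).mp hG.isUnit
  -- the inverse is continuous at c = 0
  have hK : Tendsto (fun c : ℝ => (Aᴴ * A + (c : ℂ) • (1 : Matrix (Fin S) (Fin S) ℂ))⁻¹)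
      (𝓝 0) (𝓝 (Aᴴ * A)⁻¹) := by
    have h1 : ContinuousAt Inv.inv (Aᴴ * A) := by
      apply continuousAt_matrix_inv
      rw [Ring.inverse_eq_inv']
      exact continuousAt_inv₀ hGdet.ne_zero
    have h2 : Tendsto (fun c : ℝ => Aᴴ * A + (c : ℂ) • (1 : Matrix (Fin S) (Fin S) ℂ))
        (𝓝 0) (𝓝 (Aᴴ * A)) := by
      have : Continuous (fun c : ℝ => Aᴴ * A + (c : ℂ) • (1 : Matrix (Fin S) (Fin S) ℂ)) := by
        fun_prop
      simpa using this.tendsto 0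
    exact h1.tendsto.comp h2
  let F : ℝ → Matrix (Fin S) (Fin S) ℂ → ℝ := fun t K =>
    (1 / (S : ℝ)) * (Matrix.trace ((1 - K * Aᴴ * B) * (1 - K * Aᴴ * B)ᴴ)).re +
      t * (Matrix.trace (K * K * (Aᴴ * A))).re
  have hF : Continuous (fun p : ℝ × Matrix (Fin S) (Fin S) ℂ => F p.1 p.2) := by
    have h0 : Continuous (fun p : ℝ × Matrix (Fin S) (Fin S) ℂ => 1 - p.2 * Aᴴ * B) :=
      continuous_const.sub
        ((continuous_snd.matrix_mul continuous_const).matrix_mul continuous_const)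
    have h1 := Complex.continuous_re.comp
      (h0.matrix_mul h0.matrix_conjTranspose).matrix_trace
    have h2 : Continuous (fun p : ℝ × Matrix (Fin S) (Fin S) ℂ => p.2 * p.2 * (Aᴴ * A)) :=
      (continuous_snd.matrix_mul continuous_snd).matrix_mul continuous_const
    have h3 := Complex.continuous_re.comp h2.matrix_trace
    exact (continuous_const.mul h1).add (continuous_fst.mul h3)
  have hlim : F 0 (Aᴴ * A)⁻¹ = lim := by
    simp only [F, lim]
    rw [aux_trace]
    simp
  have ht : Tendsto (fun ρ : ℝ => 1 / (ρ * N)) atTop (𝓝 0) := by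
    simp_rw [one_div]
    exact tendsto_inv_atTop_zero.comp (tendsto_id.atTop_mul_const hN)
  have hc : Tendsto (fun ρ : ℝ => (S : ℝ) / (ρ * N)) atTop (𝓝 0) := by
    have := ht.const_mul (S : ℝ)
    simpa [div_eq_mul_inv] using this
  have hEF : ∀ ρ : ℝ, 0 < ρ → E ρ = F (1 / (ρ * N))
      (Aᴴ * A + (((S : ℝ) / (ρ * N) : ℝ) : ℂ) • (1 : Matrix (Fin S) (Fin S) ℂ))⁻¹ := by
    intro ρ hρ
    have hcpos : 0 < (S : ℝ) / (ρ * N) := by positivity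
    have hp := aux_push A _ hcpos
    simp only [E, F]
    rw [← Matrix.mul_assoc Aᴴ, hp, Matrix.mul_assoc _ Aᴴ (_⁻¹), hp]
    simp only [Matrix.mul_assoc]
  have hT : Tendsto E atTop (𝓝 lim) := by
    rw [← hlim]
    have h1 := (hF.tendsto (0, (Aᴴ * A)⁻¹)).comp (ht.prodMk_nhds (hK.comp hc))
    refine h1.congr' ?_
    filter_upwards [eventually_gt_atTop 0] with ρ hρ
    exact (hEF ρ hρ).symm
  have hpos : 0 < lim := by
    have hnn : 0 ≤ lim := by
      simp only [lim]
      exact mul_nonneg (by positivity)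
        (Finset.sum_nonneg fun i _ => Finset.sum_nonneg fun j _ => Complex.normSq_nonneg _)
    refine lt_of_le_of_ne hnn fun h0 => hAB ?_
    have hs : ∑ i : Fin S, ∑ j : Fin S,
        Complex.normSq ((((Aᴴ * A)⁻¹ * Aᴴ * B - 1) : Matrix (Fin S) (Fin S) ℂ) i j) = 0 := by
      rcases mul_eq_zero.mp h0.symm with h | h
      · exact absurd h (by positivity)
      · exact h
    have hM : (Aᴴ * A)⁻¹ * Aᴴ * B = 1 := by
      rw [← sub_eq_zero]
      ext i j
      have h1 := (Finset.sum_eq_zero_iff_of_nonneg (fun i _ =>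
        Finset.sum_nonneg fun j _ => Complex.normSq_nonneg _)).mp hs i (Finset.mem_univ i)
      have h2 := (Finset.sum_eq_zero_iff_of_nonneg (fun j _ =>
        Complex.normSq_nonneg _)).mp h1 j (Finset.mem_univ j)
      simpa using Complex.normSq_eq_zero.mp h2
    have hAB2 : Aᴴ * B = Aᴴ * A := by
      have := congrArg (fun X => (Aᴴ * A) * X) hM
      simp only [Matrix.mul_one] at this
      rwa [Matrix.mul_assoc _ Aᴴ B, Matrix.mul_nonsing_inv_cancel_left _ _ hGdet] at this
    have hBA : Bᴴ * A = Aᴴ * A := by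
      have := congrArg Matrix.conjTranspose hAB2
      simpa [Matrix.conjTranspose_mul] using this
    have hD : Matrix.trace ((A - B)ᴴ * (A - B)) = 0 := by
      rw [Matrix.conjTranspose_sub, Matrix.sub_mul, Matrix.mul_sub, Matrix.mul_sub, hAB2, hBA]
      simp [htr]
    exact sub_eq_zero.mp (Matrix.trace_conjTranspose_mul_self_eq_zero_iff.mp hD)
  refine ⟨hT, hpos, ?_⟩
  rintro ⟨C, hC⟩
  have hC0 : Tendsto (fun ρ : ℝ => C / ρ) atTop (𝓝 0) := tendsto_const_nhds.div_atTop tendsto_id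
  have : lim ≤ 0 := by
    refine le_of_tendsto_of_tendsto hT hC0 ?_
    filter_upwards [eventually_gt_atTop 0] with ρ hρ
    exact hC ρ hρ
  exact absurd hpos (not_lt.mpr this)
end

section
/- Let N be a prime number, let 1 ≤ S ≤ L ≤ N, let P ≥ S + 1, and fix a pilot index set R ⊆ {0,…,N−1} with |R| = P. Let C₁,…,C_M enumerate all S-element subsets of {0,…,L−1} (M = binom(L,S)), and for each i let Π_i denote the orthogonal projection of ℂ^P onto the column space of F(R,C_i) and Π_i^⊥ = I_P − Π_i. Fix a true support index t ∈ {1,…,M}. Let h ∈ ℂ^S and ν ∈ ℂ^P be independent random vectors such that the real and imaginary parts of all of their entries are independent real zero-mean Gaussians, with each entry of h circularly symmetric complex Gaussian of variance 1/S (real and imaginary parts each of variance 1/(2S)) and each entry of ν circularly symmetric complex Gaussian of variance 1 (real and imaginary parts each of variance 1/2). For ρ > 0, set z(ρ) = F(R,C_t)·h + (ρN)^{-1/2}·ν. Then the probability of the support-detection error event {∃ i ≠ t : ‖Π_i^⊥ z(ρ)‖ < ‖Π_t^⊥ z(ρ)‖} tends to 0 as ρ → ∞. -/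
open Matrix Complex MeasureTheory ProbabilityTheory Filter Topology

/-- The law of a circularly symmetric complex Gaussian scalar whose real and imaginary
parts are independent real zero-mean Gaussians, each of variance `v`. -/
noncomputable def cplxGaussian (v : NNReal) : Measure ℂ :=
  Measure.map (fun p : ℝ × ℝ => ⟨p.1, p.2⟩)
    ((gaussianReal 0 v).prod (gaussianReal 0 v))

/-- The orthogonal projector onto the orthogonal complement of the column space of the
pilot submatrix `F(R,C)` of the unitary `N`-DFT matrix (rows `R` given by the
embedding `r`, columns `C` given by the embedding `c`); since that submatrix `B` has
full column rank this projector is `I − B(BᴴB)⁻¹Bᴴ`. -/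
noncomputable def perpProj (N P S : ℕ) (r : Fin P ↪ Fin N) (c : Fin S ↪ Fin N) :
    Matrix (Fin P) (Fin P) ℂ :=
  1 - (dftMatrix N).submatrix (⇑r) (⇑c) *
      (((dftMatrix N).submatrix (⇑r) (⇑c))ᴴ * (dftMatrix N).submatrix (⇑r) (⇑c))⁻¹ *
      ((dftMatrix N).submatrix (⇑r) (⇑c))ᴴ

open Polynomial in
lemma moment_eq_zero {k : Type*} [Field k] (T : Finset ℕ) (j : ℕ) :
    ∀ (m : ℕ) (g : k[X]), j < m → (X - C 1) ^ m ∣ g → g.support ⊆ T →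
      ∑ n ∈ T, g.coeff n * (n : k) ^ j = 0 := by
  induction j with
  | zero =>
    intro m g hm hd hT
    have h1 : g.eval 1 = 0 := by
      have : (X - C 1) ∣ g := dvd_trans (dvd_pow_self _ (by omega)) hd
      exact dvd_iff_isRoot.1 this
    rw [eval_eq_sum, Polynomial.sum_def] at h1
    simp only [one_pow, mul_one] at h1
    simp only [pow_zero, mul_one]
    rw [← h1]
    exact (Finset.sum_subset hT fun n _ hn => notMem_support_iff.1 hn).symm
  | succ j ih =>
    intro m g hm hd hT
    obtain ⟨m, rfl⟩ : ∃ m', m = m' + 1 := ⟨m - 1, by omega⟩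
    have h1 : (X - C 1) ^ m ∣ X * derivative g := by
      obtain ⟨q, rfl⟩ := hd
      refine Dvd.dvd.mul_left ?_ _
      rw [derivative_mul, derivative_X_sub_C_pow]
      refine dvd_add ?_ ?_
      · exact Dvd.dvd.mul_right (by simp) _
      · exact Dvd.dvd.mul_right (pow_dvd_pow _ (by omega)) _
    have hc : ∀ n, (X * derivative g).coeff n = g.coeff n * n := by
      intro n
      cases n with
      | zero => simp
      | succ n => rw [coeff_X_mul, coeff_derivative]; push_cast; ring
    have := ih m (X * derivative g) (by omega) h1 (by
      intro n hn
      apply hT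
      rw [mem_support_iff] at hn ⊢
      rw [hc] at hn
      exact left_ne_zero_of_mul hn)
    rw [← this]
    refine Finset.sum_congr rfl fun n _ => ?_
    rw [hc]; ring

open Polynomial in
lemma sparse_eq_zero {k : Type*} [Field k] (T : Finset ℕ) (m : ℕ) (g : k[X])
    (hd : (X - C 1) ^ m ∣ g) (hT : g.support ⊆ T) (hm : T.card ≤ m)
    (hinj : Set.InjOn (Nat.cast : ℕ → k) T) : g = 0 := by
  have h := Matrix.eq_zero_of_forall_pow_sum_mul_pow_eq_zero
    (f := fun i : Fin T.card => (((T.equivFin.symm i : T) : ℕ) : k))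
    (v := fun i => g.coeff (T.equivFin.symm i : T)) (by
      intro a b hab
      have := hinj (T.equivFin.symm a).2 (T.equivFin.symm b).2 hab
      exact T.equivFin.symm.injective (Subtype.ext this)) (by
      intro i
      have := moment_eq_zero T i m g (by omega) hd hT
      rw [← this, ← Finset.sum_coe_sort T]
      exact Equiv.sum_comp T.equivFin.symm (fun n : T => g.coeff n * (n : k) ^ (i : ℕ)))
  ext n
  rw [coeff_zero]
  by_contra hn
  have hn' : n ∈ T := hT (mem_support_iff.2 hn)
  have := congrFun h (T.equivFin ⟨n, hn'⟩)
  simp at this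
  exact hn this

/-- A valuation ring of `ℂ` over `p`. -/
lemma exists_valuationSubring (p : ℕ) (hp : p.Prime) :
    ∃ B : ValuationSubring ℂ, (p : ℂ) ∈ B.nonunits := by
  let A : Subring ℂ := (Int.castRingHom ℂ).range
  let pA : A := (p : A)
  obtain ⟨B, -, h⟩ := Ideal.image_subset_nonunits_valuationSubring (A := A) (Ideal.span {pA}) (by
    intro h
    rw [Ideal.span_singleton_eq_top] at h
    obtain ⟨u, hu⟩ := h.exists_right_inv
    obtain ⟨z, hz⟩ := u.2
    have h2 := congrArg (Subtype.val) hu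
    simp [pA, ← hz] at h2
    have h3 : (p : ℤ) * z = 1 := by exact_mod_cast h2
    have h4 : (p : ℤ) ∣ 1 := ⟨z, h3.symm⟩
    have h5 : p ∣ 1 := by exact_mod_cast h4
    exact hp.one_lt.ne' (Nat.dvd_one.1 h5))
  exact ⟨B, h ⟨pA, Ideal.subset_span rfl, by simp [pA]⟩⟩

open Polynomial in
/-- Chebotarev's theorem on minors of the DFT, in uncertainty form. -/
lemma chebotarev_s13 (p : ℕ) (hp : p.Prime) (ω : ℂ) (hω : IsPrimitiveRoot ω p)
    (x : ℕ → ℂ) (T R : Finset ℕ) (hT : ∀ n ∈ T, n < p) (hR : ∀ n ∈ R, n < p)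
    (hTR : T.card ≤ R.card)
    (h : ∀ r ∈ R, ∑ n ∈ T, x n * (ω ^ r) ^ n = 0) : ∀ n ∈ T, x n = 0 := by
  by_contra! hne
  obtain ⟨n1, hn1, hx1⟩ := hne
  obtain ⟨B, hB⟩ := exists_valuationSubring p hp
  obtain ⟨n0, hn0, hmax⟩ := T.exists_max_image (fun n => B.valuation (x n)) ⟨n1, hn1⟩
  have hx0 : x n0 ≠ 0 := by
    intro h0
    have := hmax n1 hn1
    rw [h0, map_zero, le_zero_iff, map_eq_zero] at this
    exact hx1 this
  have hmem : ∀ n ∈ T, x n / x n0 ∈ B := by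
    intro n hn
    rw [← B.valuation_le_one_iff, map_div₀]
    exact div_le_one_of_le₀ (hmax n hn) zero_le
  have hωB : ω ∈ B := by
    rw [← B.valuation_le_one_iff]
    have : B.valuation ω ^ p = 1 := by rw [← map_pow, hω.pow_eq_one, map_one]
    exact ((pow_eq_one_iff_of_nonneg zero_le hp.ne_zero).1 this).le
  let w : B := ⟨ω, hωB⟩
  let y : ℕ → B := fun n => if hn : n ∈ T then ⟨x n / x n0, hmem n hn⟩ else 0
  let g : B[X] := ∑ n ∈ T, C (y n) * X ^ n
  have hgc : ∀ n, g.coeff n = y n := by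
    intro n
    simp only [g, finsetSum_coeff, coeff_C_mul, coeff_X_pow]
    by_cases hn : n ∈ T
    · simp [hn]
    · simp [hn, y]
  let q : B[X] := ∏ r ∈ R, (X - C (w ^ r))
  have hqm : q.Monic := monic_prod_of_monic _ _ fun r _ => monic_X_sub_C _
  have hinj : Function.Injective (B.subtype) := B.subtype_injective
  have hdvd : q ∣ g := by
    rw [← map_dvd_map B.subtype hinj hqm]
    simp only [q, Polynomial.map_prod]
    refine Finset.prod_dvd_of_coprime ?_ ?_
    · intro a ha b hb hab
      simp only [Polynomial.map_sub, map_X, map_C, Function.onFun]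
      apply isCoprime_X_sub_C_of_isUnit_sub
      rw [isUnit_iff_ne_zero, sub_ne_zero]
      intro hh
      apply hab
      exact hω.pow_inj (hR a ha) (hR b hb) (by simpa [w] using hh)
    · intro r hr
      simp only [Polynomial.map_sub, map_X, map_C]
      rw [dvd_iff_isRoot, IsRoot.def, eval_map, eval₂_finsetSum]
      have := h r hr
      have h2 : (∑ n ∈ T, x n * (ω ^ r) ^ n) / x n0 = 0 := by rw [this, zero_div]
      rw [Finset.sum_div] at h2
      rw [← h2]
      refine Finset.sum_congr rfl fun n hn => ?_
      simp [y, hn, w]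
      ring
  let φ : B →+* IsLocalRing.ResidueField B := IsLocalRing.residue B
  have hp0 : ((p : ℕ) : IsLocalRing.ResidueField B) = 0 := by
    have : φ (p : B) = 0 := by
      rw [IsLocalRing.residue_eq_zero_iff, B.valuation_lt_one_iff]
      simpa using (B.mem_nonunits_iff).1 hB
    simpa using this
  have : Fact p.Prime := ⟨hp⟩
  have : CharP (IsLocalRing.ResidueField B) p :=
    (CharP.charP_iff_prime_eq_zero hp).2 hp0
  have hw1 : φ w = 1 := by
    have h1 : w ^ p = 1 := by ext; simp [w, hω.pow_eq_one]
    have h2 : (φ w - 1) ^ p = 0 := by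
      rw [sub_pow_char, ← map_pow, h1]; simp
    exact sub_eq_zero.1 (pow_eq_zero_iff hp.ne_zero |>.1 h2)
  have hd2 : (X - C 1) ^ R.card ∣ g.map φ := by
    have := Polynomial.map_dvd φ hdvd
    simpa [q, Polynomial.map_prod, hw1] using this
  have hz := sparse_eq_zero T R.card (g.map φ) hd2 (by
      intro n hn
      by_contra hnT
      rw [mem_support_iff, coeff_map, hgc] at hn
      simp [y, hnT] at hn) hTR (by
      intro a ha b hb hab
      exact (CharP.natCast_injOn_Iio (IsLocalRing.ResidueField B) p) (hT a ha) (hT b hb) hab)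
  have := congrArg (fun f => coeff f n0) hz
  simp only [coeff_map, hgc, coeff_zero] at this
  have h1 : y n0 = 1 := by ext; simp [y, hn0, hx0]
  rw [h1, map_one] at this
  exact one_ne_zero this

lemma dft_uncertainty (N P : ℕ) (hN : N.Prime) (r : Fin P ↪ Fin N) (x : Fin N → ℂ)
    (T : Finset (Fin N)) (hT : T.card ≤ P) (hx : ∀ k, k ∉ T → x k = 0)
    (h : ∀ i, ∑ k, dftMatrix N (r i) k * x k = 0) : x = 0 := by
  have hN0 : (N : ℂ) ≠ 0 := by exact_mod_cast hN.ne_zero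
  let ω : ℂ := (Complex.exp (2 * Real.pi * Complex.I / N))⁻¹
  have hω : IsPrimitiveRoot ω N := (Complex.isPrimitiveRoot_exp N hN.ne_zero).inv
  have hF : ∀ a b : Fin N, dftMatrix N a b
      = ((1 / Real.sqrt N : ℝ) : ℂ) * (ω ^ (a : ℕ)) ^ (b : ℕ) := by
    intro a b
    simp only [dftMatrix, Matrix.of_apply, ω]
    rw [← Complex.exp_neg, ← Complex.exp_nat_mul, ← Complex.exp_nat_mul]
    congr 2
    field_simp
  have hs : ((1 / Real.sqrt N : ℝ) : ℂ) ≠ 0 := by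
    have : (0 : ℝ) < N := by exact_mod_cast hN.pos
    have : Real.sqrt N ≠ 0 := (Real.sqrt_pos.2 this).ne'
    exact_mod_cast one_div_ne_zero this
  let x' : ℕ → ℂ := fun n => if hn : n < N then x ⟨n, hn⟩ else 0
  have key := chebotarev_s13 N hN ω hω x' (T.map Fin.valEmbedding)
    (Finset.univ.map (r.trans Fin.valEmbedding))
    (by simp) (by simp) (by simpa using hT) (by
      intro n hn
      rw [Finset.mem_map] at hn
      obtain ⟨i, -, rfl⟩ := hn
      have h1 := h i
      rw [← Finset.sum_subset (Finset.subset_univ T) (by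
        intro k _ hk; rw [hx k hk, mul_zero])] at h1
      simp only [hF, mul_assoc] at h1
      rw [← Finset.mul_sum] at h1
      have h2 := (mul_eq_zero.1 h1).resolve_left hs
      rw [Finset.sum_map, ← h2]
      refine Finset.sum_congr rfl fun k _ => ?_
      simp [x', mul_comm])
  funext k
  by_cases hk : k ∈ T
  · have := key k (Finset.mem_map_of_mem _ hk)
    simpa [x'] using this
  · exact hx k hk

lemma sub_mulVec_eq (N P S : ℕ) (r : Fin P ↪ Fin N) (c : Fin S ↪ Fin N) (w : Fin S → ℂ)
    (i : Fin P) : ((dftMatrix N).submatrix r c).mulVec w i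
      = ∑ k, dftMatrix N (r i) k * (Function.extend c w 0) k := by
  classical
  rw [← Finset.sum_subset (Finset.subset_univ (Finset.univ.map c)) (by
    intro k _ hk
    rw [Function.extend_apply', Pi.zero_apply, mul_zero]
    rintro ⟨a, rfl⟩
    exact hk (by simp)), Finset.sum_map]
  simp [Matrix.mulVec, dotProduct, c.injective.extend_apply]

lemma sub_injective (N P S : ℕ) (hN : N.Prime) (hP : S ≤ P)
    (r : Fin P ↪ Fin N) (c : Fin S ↪ Fin N) (w : Fin S → ℂ)
    (h : ((dftMatrix N).submatrix r c).mulVec w = 0) : w = 0 := by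
  have := dft_uncertainty N P hN r (Function.extend c w 0) (Finset.univ.map c)
    (by simpa using hP) (by
      intro k hk
      rw [Function.extend_apply', Pi.zero_apply]
      rintro ⟨a, rfl⟩
      exact hk (by simp)) (fun i => by rw [← sub_mulVec_eq, h]; rfl)
  funext j
  have h1 := congrFun this (c j)
  rwa [c.injective.extend_apply] at h1

open ComplexOrder in
lemma perpProj_mul_self (N P S : ℕ) (hN : N.Prime) (hP : S ≤ P)
    (r : Fin P ↪ Fin N) (c : Fin S ↪ Fin N) :
    perpProj N P S r c * (dftMatrix N).submatrix r c = 0 := by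
  unfold perpProj
  have hinj := sub_injective N P S hN hP r c
  set B := (dftMatrix N).submatrix r c with hB
  have hu : IsUnit (Bᴴ * B) := by
    rw [← Matrix.mulVec_injective_iff_isUnit]
    intro a b hab
    have : (Bᴴ * B).mulVec (a - b) = 0 := by
      rw [Matrix.mulVec_sub]; exact sub_eq_zero.2 hab
    rw [Matrix.conjTranspose_mul_self_mulVec_eq_zero] at this
    exact sub_eq_zero.1 (hinj _ this)
  have hdet := (Matrix.isUnit_iff_isUnit_det _).1 hu
  rw [Matrix.sub_mul, Matrix.one_mul, Matrix.mul_assoc, Matrix.mul_assoc,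
    Matrix.nonsing_inv_mul _ hdet, Matrix.mul_one, sub_self]

lemma perpProj_mul_ne_zero (N P S : ℕ) (hN : N.Prime) (hP : S + 1 ≤ P)
    (r : Fin P ↪ Fin N) (c ct : Fin S ↪ Fin N) (hne : Set.range c ≠ Set.range ct) :
    perpProj N P S r c * (dftMatrix N).submatrix r ct ≠ 0 := by
  classical
  intro h0
  obtain ⟨j, hj⟩ : ∃ j, ct j ∉ Set.range c := by
    by_contra! hall
    apply hne
    symm
    have hsub : Finset.univ.map ct ⊆ Finset.univ.map c := by
      intro k hk
      rw [Finset.mem_map] at hk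
      obtain ⟨j, -, rfl⟩ := hk
      obtain ⟨a, ha⟩ := hall j
      rw [← ha]; simp
    have := Finset.eq_of_subset_of_card_le hsub (by simp)
    have := congrArg (fun s : Finset (Fin N) => (s : Set (Fin N))) this
    simpa using this
  have h1 : (perpProj N P S r c).mulVec
      (((dftMatrix N).submatrix r ct).mulVec (Pi.single j 1)) = 0 := by
    rw [Matrix.mulVec_mulVec, h0, Matrix.zero_mulVec]
  unfold perpProj at h1
  rw [Matrix.sub_mulVec, Matrix.one_mulVec, Matrix.mul_assoc, ← Matrix.mulVec_mulVec] at h1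
  generalize ((((dftMatrix N).submatrix r c)ᴴ * (dftMatrix N).submatrix r c)⁻¹ *
      ((dftMatrix N).submatrix r c)ᴴ).mulVec
      (((dftMatrix N).submatrix r ct).mulVec (Pi.single j 1)) = w at h1
  have := dft_uncertainty N P hN r
    (Function.extend ct (Pi.single j 1) 0 - Function.extend c w 0)
    (insert (ct j) (Finset.univ.map c))
    ((Finset.card_insert_le _ _).trans (by simpa using hP)) (by
      intro k hk
      rw [Finset.mem_insert, not_or] at hk
      have h2 : Function.extend c w 0 k = 0 := by
        rw [Function.extend_apply', Pi.zero_apply]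
        rintro ⟨a, rfl⟩
        exact hk.2 (by simp)
      have h3 : Function.extend ct (Pi.single j (1 : ℂ)) 0 k = 0 := by
        by_cases hk2 : ∃ a, ct a = k
        · obtain ⟨a, rfl⟩ := hk2
          rw [ct.injective.extend_apply, Pi.single_eq_of_ne]
          rintro rfl
          exact hk.1 rfl
        · rw [Function.extend_apply' _ _ _ hk2, Pi.zero_apply]
      rw [Pi.sub_apply, h2, h3, sub_zero]) (by
      intro i
      have := congrFun h1 i
      rw [Pi.sub_apply, sub_mulVec_eq, sub_mulVec_eq, ← Finset.sum_sub_distrib] at this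
      simpa [mul_sub] using this)
  have h2 := congrFun this (ct j)
  rw [Pi.sub_apply, ct.injective.extend_apply, Function.extend_apply' _ _ _ hj] at h2
  simp at h2

lemma cplxGaussian_isProb (v : NNReal) : IsProbabilityMeasure (cplxGaussian v) := by
  unfold cplxGaussian
  exact Measure.isProbabilityMeasure_map
    (Complex.measurableEquivRealProd.symm.measurable.aemeasurable)

lemma cplxGaussian_noAtoms (v : NNReal) (hv : v ≠ 0) : NullSingletonClass (cplxGaussian v) := by
  have := nullSingletonClass_gaussianReal (μ := 0) hv
  refine ⟨fun z => ?_⟩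
  unfold cplxGaussian
  have hm : Measurable (fun p : ℝ × ℝ => (⟨p.1, p.2⟩ : ℂ)) :=
    Complex.measurableEquivRealProd.symm.measurable
  rw [Measure.map_apply hm (measurableSet_singleton z)]
  refine measure_mono_null (t := {(z.re, z.im)}) ?_ (measure_singleton _)
  rintro ⟨a, b⟩ h
  rw [Set.mem_preimage, Set.mem_singleton_iff] at h
  rw [← h]
  rfl

lemma hyperplane_null (S : ℕ) (μ : Measure ℂ) [IsProbabilityMeasure μ] [NullSingletonClass μ]
    (a : Fin S → ℂ) (ha : a ≠ 0) :
    (Measure.pi fun _ : Fin S => μ) {h | ∑ k, a k * h k = 0} = 0 := by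
  obtain ⟨j, hj⟩ := Function.ne_iff.1 ha
  obtain ⟨n, rfl⟩ : ∃ n, S = n + 1 := ⟨S - 1, by have := j.2; omega⟩
  have hmp := measurePreserving_piFinSuccAbove (fun _ : Fin (n + 1) => μ) j
  have hms : MeasurableSet {q : ℂ × (Fin n → ℂ) | a j * q.1 + ∑ k, a (j.succAbove k) * q.2 k = 0} :=
    measurableSet_eq_fun (by fun_prop) (by fun_prop)
  have h1 : {h : Fin (n + 1) → ℂ | ∑ k, a k * h k = 0} =
      MeasurableEquiv.piFinSuccAbove (fun _ => ℂ) j ⁻¹'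
        {q : ℂ × (Fin n → ℂ) | a j * q.1 + ∑ k, a (j.succAbove k) * q.2 k = 0} := by
    ext h
    rw [Set.mem_ofPred_eq, Fin.sum_univ_succAbove _ j]
    rfl
  rw [h1, hmp.measure_preimage hms.nullMeasurableSet, Measure.prod_apply_symm hms]
  rw [lintegral_eq_zero_of_ae_eq_zero]
  refine ae_of_all _ fun y => ?_
  refine Set.Subsingleton.measure_zero ?_ _
  intro u hu v hv
  simp only [Set.mem_preimage, Set.mem_ofPred_eq] at hu hv
  have : a j * u = a j * v := by linear_combination hu - hv
  exact mul_left_cancel₀ hj this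

lemma mulVec_ae_ne_zero (S P : ℕ) (μ : Measure ℂ) [IsProbabilityMeasure μ] [NullSingletonClass μ]
    (A : Matrix (Fin P) (Fin S) ℂ) (hA : A ≠ 0) :
    ∀ᵐ h ∂(Measure.pi fun _ : Fin S => μ), A.mulVec h ≠ 0 := by
  obtain ⟨i, hi⟩ : ∃ i, A i ≠ 0 := Function.ne_iff.1 hA
  rw [ae_iff]
  refine measure_mono_null ?_ (hyperplane_null S μ (A i) hi)
  intro h hh
  simp only [ne_eq, not_not, Set.mem_ofPred_eq] at hh
  exact congrFun hh i

/-- **Asymptotic reliability of pilot-aided support estimation (PASE).**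
Let `N` be prime, `1 ≤ S ≤ L ≤ N`, `P ≥ S + 1` pilots at rows `R` (embedding `r`),
and let the true support `C_t ⊆ {0,…,L−1}` be given by the embedding `ct`.  Let
`h ∈ ℂ^S` and `ν ∈ ℂ^P` be independent, with i.i.d. circularly symmetric complex
Gaussian entries of variance `1/S` and `1` respectively (so their joint law is the
product measure below), and let `z(ρ) = F(R,C_t)h + (ρN)^{−1/2}ν`.  Then the
probability that some wrong support hypothesis (a size-`S` subset of `{0,…,L−1}`
distinct from `C_t`) yields a strictly smaller projection-error energy
`‖Π_i^⊥ z(ρ)‖ < ‖Π_t^⊥ z(ρ)‖` tends to `0` as `ρ → ∞`. -/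
theorem pase_error_vanishes (N L S P : ℕ) (hN : N.Prime) (hS : 1 ≤ S)
    (hSL : S ≤ L) (hLN : L ≤ N) (hP : S + 1 ≤ P)
    (r : Fin P ↪ Fin N) (ct : Fin S ↪ Fin N) (hct : ∀ j, (ct j : ℕ) < L) :
    Tendsto
      (fun ρ : ℝ =>
        ((Measure.pi fun _ : Fin S => cplxGaussian (1 / (2 * S))).prod
            (Measure.pi fun _ : Fin P => cplxGaussian (1 / 2)))
          {p : (Fin S → ℂ) × (Fin P → ℂ) |
            ∃ c : Fin S ↪ Fin N,
              (∀ j, (c j : ℕ) < L) ∧ Set.range (⇑c) ≠ Set.range (⇑ct) ∧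
                Real.sqrt (∑ i : Fin P,
                    Complex.normSq
                      ((perpProj N P S r c).mulVec
                        (((dftMatrix N).submatrix (⇑r) (⇑ct)).mulVec p.1 +
                          (Real.sqrt (ρ * N))⁻¹ • p.2) i)) <
                  Real.sqrt (∑ i : Fin P,
                    Complex.normSq
                      ((perpProj N P S r ct).mulVec
                        (((dftMatrix N).submatrix (⇑r) (⇑ct)).mulVec p.1 +
                          (Real.sqrt (ρ * N))⁻¹ • p.2) i))})
      atTop (𝓝 0) := by
  have hv : (1 / (2 * S) : NNReal) ≠ 0 := by
    have : (S : NNReal) ≠ 0 := by exact_mod_cast (by omega : S ≠ 0)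
    positivity
  have i1 := cplxGaussian_isProb (1 / (2 * S))
  have i2 := cplxGaussian_isProb (1 / 2)
  have i3 := cplxGaussian_noAtoms (1 / (2 * S)) hv
  rw [← measure_empty (μ := ((Measure.pi fun _ : Fin S => cplxGaussian (1 / (2 * S))).prod
            (Measure.pi fun _ : Fin P => cplxGaussian (1 / 2))))]
  refine tendsto_measure_of_ae_tendsto_indicator_of_isFiniteMeasure _ MeasurableSet.empty ?_ ?_
  · intro ρ
    simp only [Set.ofPred_exists]
    refine MeasurableSet.iUnion fun c => ?_
    simp only [Set.ofPred_and]
    refine (MeasurableSet.const _).inter ((MeasurableSet.const _).inter ?_)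
    refine measurableSet_lt ?_ ?_
    · refine Continuous.measurable ?_
      simp only [Complex.normSq_apply]
      fun_prop
    · refine Continuous.measurable ?_
      simp only [Complex.normSq_apply]
      fun_prop
  · have hae : ∀ᵐ p ∂((Measure.pi fun _ : Fin S => cplxGaussian (1 / (2 * S))).prod
            (Measure.pi fun _ : Fin P => cplxGaussian (1 / 2))),
        ∀ c : Fin S ↪ Fin N, Set.range c ≠ Set.range ct →
          (perpProj N P S r c * (dftMatrix N).submatrix r ct).mulVec p.1 ≠ 0 := by
      rw [ae_all_iff]
      intro c
      by_cases hc : Set.range c ≠ Set.range ct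
      · have := Measure.quasiMeasurePreserving_fst
          (ν := Measure.pi fun _ : Fin P => cplxGaussian (1 / 2)) |>.ae
          (mulVec_ae_ne_zero S P (cplxGaussian (1 / (2 * S))) _
            (perpProj_mul_ne_zero N P S hN hP r c ct hc))
        filter_upwards [this] with p hp _ using hp
      · exact ae_of_all _ fun p h => absurd h hc
    filter_upwards [hae] with p hp
    have hs : Tendsto (fun ρ : ℝ => (Real.sqrt (ρ * N))⁻¹) atTop (𝓝 0) := by
      have hN0 : (0 : ℝ) < N := by exact_mod_cast hN.pos
      exact tendsto_inv_atTop_zero.comp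
        (Real.tendsto_sqrt_atTop.comp (tendsto_id.atTop_mul_const hN0))
    let G : (Fin S ↪ Fin N) → ℝ → ℝ := fun c t => Real.sqrt (∑ i : Fin P,
                    Complex.normSq
                      ((perpProj N P S r c).mulVec
                        (((dftMatrix N).submatrix (⇑r) (⇑ct)).mulVec p.1 +
                          t • p.2) i))
    have hG : ∀ c, Continuous (G c) := by
      intro c
      simp only [G, Complex.normSq_apply]
      fun_prop
    have hlim : ∀ c, Tendsto (fun ρ : ℝ => G c (Real.sqrt (ρ * N))⁻¹) atTop (𝓝 (G c 0)) :=
      fun c => ((hG c).tendsto 0).comp hs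
    have hG0 : ∀ c, G c 0 = Real.sqrt (∑ i : Fin P, Complex.normSq
        ((perpProj N P S r c * (dftMatrix N).submatrix r ct).mulVec p.1 i)) := by
      intro c
      simp only [G, zero_smul, add_zero, Matrix.mulVec_mulVec]
    have ht : G ct 0 = 0 := by
      rw [hG0, perpProj_mul_self N P S hN (by omega)]
      simp
    have hpos : ∀ c : Fin S ↪ Fin N, Set.range c ≠ Set.range ct → G ct 0 < G c 0 := by
      intro c hc
      rw [ht, hG0, Real.sqrt_pos]
      obtain ⟨i, hi⟩ := Function.ne_iff.1 (hp c hc)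
      exact Finset.sum_pos' (fun i _ => Complex.normSq_nonneg _)
        ⟨i, Finset.mem_univ _, Complex.normSq_pos.2 hi⟩
    have hev : ∀ᶠ ρ : ℝ in atTop, ∀ c : Fin S ↪ Fin N, Set.range c ≠ Set.range ct →
        G ct (Real.sqrt (ρ * N))⁻¹ < G c (Real.sqrt (ρ * N))⁻¹ := by
      rw [eventually_all]
      intro c
      by_cases hc : Set.range c ≠ Set.range ct
      · filter_upwards [(hlim ct).eventually_lt (hlim c) (hpos c hc)] with ρ h _ using h
      · exact Eventually.of_forall fun ρ h => absurd h hc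
    filter_upwards [hev] with ρ hρ
    simp only [Set.mem_empty_iff_false, iff_false]
    rintro ⟨c, -, hc, hlt⟩
    exact lt_asymm hlt (hρ c hc)
end

section
/- Let P, S, M ≥ 1 be integers, let A ∈ ℂ^{P×S}, and for each i ∈ {1,…,M} let Π_i be the orthogonal projection of ℂ^P onto a linear subspace V_i ⊆ ℂ^P, with Π_i^⊥ = I_P − Π_i. Fix t ∈ {1,…,M} and assume the column space of A is contained in V_t (so Π_t^⊥ A = 0). Let h ∈ ℂ^S and ν ∈ ℂ^P be random vectors on a common probability space (with arbitrary joint distribution), let c > 0, and set z = A·h + c·ν. Then Pr{∃ i ≠ t : ‖Π_i^⊥ z‖ < ‖Π_t^⊥ z‖} ≤ Σ_{i ≠ t} Pr{‖Π_i^⊥ A h‖ < 2c·‖ν‖}. -/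
open Matrix Complex MeasureTheory

theorem pase_norm_eq {P : ℕ} (v : Fin P → ℂ) :
    Real.sqrt (∑ l : Fin P, Complex.normSq (v l)) = ‖WithLp.toLp 2 v‖ := by
  rw [EuclideanSpace.norm_eq]
  simp [Complex.normSq_eq_norm_sq]

theorem pase_contract {P : ℕ} (Q : Matrix (Fin P) (Fin P) ℂ) (hH : Qᴴ = Q) (hI : Q * Q = Q)
    (v : Fin P → ℂ) : ‖WithLp.toLp 2 (Q.mulVec v)‖ ≤ ‖WithLp.toLp 2 v‖ := by
  have key : inner ℂ (WithLp.toLp 2 (Q.mulVec v)) (WithLp.toLp 2 (Q.mulVec v))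
      = inner ℂ (WithLp.toLp 2 v) (WithLp.toLp 2 (Q.mulVec v)) := by
    rw [EuclideanSpace.inner_toLp_toLp, EuclideanSpace.inner_toLp_toLp, Matrix.star_mulVec, hH,
      dotProduct_comm, ← Matrix.dotProduct_mulVec, Matrix.mulVec_mulVec, hI, dotProduct_comm]
  have h1 := norm_inner_le_norm (𝕜 := ℂ) (WithLp.toLp 2 v) (WithLp.toLp 2 (Q.mulVec v))
  rw [← key, inner_self_eq_norm_sq_to_K] at h1
  simp only [norm_pow, RCLike.norm_ofReal, abs_norm] at h1
  by_contra! hlt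
  nlinarith [norm_nonneg (WithLp.toLp 2 v)]

/-- **Union-bound reduction for the projection-based support estimator.**
Let `Pm i` (for `i ∈ {1,…,M}`) be orthogonal projections of `ℂ^P` onto subspaces
(i.e. Hermitian idempotent matrices), let `t` be such that the column space of
`A ∈ ℂ^{P×S}` is contained in the range of `Pm t` (so `(I − Pm t)A = 0`), let
`h`, `ν` be random vectors on a common probability space with arbitrary joint
distribution, let `c > 0`, and set `z = A h + c ν`.  Then
`Pr{∃ i ≠ t : ‖(I − Pm i) z‖ < ‖(I − Pm t) z‖} ≤ ∑_{i ≠ t} Pr{‖(I − Pm i) A h‖ < 2c‖ν‖}`. -/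
theorem pase_union_bound (P S M : ℕ) (hP : 1 ≤ P) (hS : 1 ≤ S) (hM : 1 ≤ M)
    (A : Matrix (Fin P) (Fin S) ℂ) (Pm : Fin M → Matrix (Fin P) (Fin P) ℂ)
    (hHerm : ∀ i, (Pm i)ᴴ = Pm i) (hIdem : ∀ i, Pm i * Pm i = Pm i)
    (t : Fin M) (hA : ((1 : Matrix (Fin P) (Fin P) ℂ) - Pm t) * A = 0)
    (Ω : Type*) [MeasureSpace Ω] [IsProbabilityMeasure (volume : Measure Ω)]
    (h : Ω → Fin S → ℂ) (ν : Ω → Fin P → ℂ) (hh : Measurable h) (hν : Measurable ν)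
    (c : ℝ) (hc : 0 < c) :
    volume
        {ω : Ω |
          ∃ i, i ≠ t ∧
            Real.sqrt (∑ l : Fin P,
                Complex.normSq
                  ((((1 : Matrix (Fin P) (Fin P) ℂ) - Pm i).mulVec
                    (A.mulVec (h ω) + ((c : ℝ) : ℂ) • ν ω)) l)) <
              Real.sqrt (∑ l : Fin P,
                Complex.normSq
                  ((((1 : Matrix (Fin P) (Fin P) ℂ) - Pm t).mulVec
                    (A.mulVec (h ω) + ((c : ℝ) : ℂ) • ν ω)) l))} ≤
      ∑ i ∈ Finset.univ.erase t,
        volume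
          {ω : Ω |
            Real.sqrt (∑ l : Fin P,
                Complex.normSq
                  ((((1 : Matrix (Fin P) (Fin P) ℂ) - Pm i).mulVec
                    (A.mulVec (h ω))) l)) <
              2 * c * Real.sqrt (∑ l : Fin P, Complex.normSq (ν ω l))} := by
  have hHQ : ∀ i, (1 - Pm i)ᴴ = 1 - Pm i := fun i => by
    rw [Matrix.conjTranspose_sub, hHerm, Matrix.conjTranspose_one]
  have hIQ : ∀ i, (1 - Pm i) * (1 - Pm i) = 1 - Pm i := fun i => by
    simp [sub_mul, mul_sub, hIdem]
  refine le_trans (measure_mono ?_) (measure_biUnion_finset_le _ _)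
  rintro ω ⟨i, hit, hi⟩
  simp only [Set.mem_iUnion]
  refine ⟨i, by simp [hit], ?_⟩
  simp only [Set.mem_ofPred_eq]
  simp only [pase_norm_eq, Matrix.mulVec_add, Matrix.mulVec_smul, WithLp.toLp_add,
    WithLp.toLp_smul] at hi ⊢
  rw [Matrix.mulVec_mulVec (h ω) (1 - Pm t), hA, Matrix.zero_mulVec, WithLp.toLp_zero, zero_add,
    norm_smul, Complex.norm_real, Real.norm_of_nonneg hc.le] at hi
  have h1 := mul_le_mul_of_nonneg_left (pase_contract _ (hHQ t) (hIQ t) (ν ω)) hc.le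
  have h2 := mul_le_mul_of_nonneg_left (pase_contract _ (hHQ i) (hIQ i) (ν ω)) hc.le
  have h3 := norm_sub_le_norm_add (WithLp.toLp 2 ((1 - Pm i).mulVec (A.mulVec (h ω))))
    ((c : ℂ) • WithLp.toLp 2 ((1 - Pm i).mulVec (ν ω)))
  rw [norm_smul, Complex.norm_real, Real.norm_of_nonneg hc.le] at h3
  linarith
end
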